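/- Let A be a commutative semiring and ⋀ the exterior semialgebra over A. For every r ≥ 1 and every partition λ with at most r parts, the Schubert derivations σ̄_-(z) and σ̄_+(w) commute against x^0 in the following sense, coefficientwise in the powers of z^{−1} and w: (σ̄_-(z)(σ̄_+(w)[x]^r_λ)) ∧ x^0 = (σ̄_+(w)(σ̄_-(z)[x]^r_λ)) ∧ x^0. -/

import Mathlib

/-!  The exterior semialgebra over a commutative semiring `A`, following
Chapman–Gatto–Rowen.  It is the free `A`-module on the basis consisting of a
unit symbol `1` (here `none`) together with all pairs `(ε, s)` where
`ε ∈ {+1, −1}` (here a `Bool`, `true = +1`) and `s` is a strictly decreasing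
nonempty tuple of natural numbers (here a nonempty `Finset ℕ`, read in
decreasing order).  -/

namespace ExtSemi

/-- The basis: `none` is the unit `1`; `some (ε, s)` is the sign `ε` times the
strictly decreasing wedge monomial on the nonempty finite set `s`. -/
abbrev XB : Type := Option (Bool × {s : Finset ℕ // s.Nonempty})

variable (A : Type*) [CommSemiring A]

/-- The exterior semialgebra `⋀`: the free `A`-module on `XB`. -/
abbrev Ext : Type _ := XB →₀ A

/-- Sign flip on the basis; the unit is fixed. -/
def negB : XB → XB
  | none => none
  | some (ε, s) => some (!ε, s)

/-- The negation map `(−)` on `⋀`: the `A`-linear map sending `(ε, s)` to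
`(−ε, s)` and fixing `1`. -/
noncomputable def neg : Ext A →ₗ[A] Ext A := Finsupp.lmapDomain A A negB

/-- The signed basis element attached to a sign and a finite set; the empty set
gives the unit (on which the negation acts trivially). -/
noncomputable def bElem (ε : Bool) (t : Finset ℕ) : Ext A :=
  if h : t.Nonempty then Finsupp.single (some (ε, ⟨t, h⟩)) 1 else Finsupp.single none 1

/-- The unit `1` of `⋀`. -/
noncomputable def one : Ext A := Finsupp.single (none : XB) 1

/-- The generator `x^i`. -/
noncomputable def xg (i : ℕ) : Ext A := bElem A true {i}

/-- `true` iff merging the decreasing enumerations of the disjoint sets `s`, `t`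
(concatenated as `s ++ t`) into a single decreasing enumeration is an even
permutation, i.e. iff the number of pairs `(a ∈ s, b ∈ t)` with `a < b` is even. -/
def mergeEven (s t : Finset ℕ) : Bool :=
  decide ((∑ a ∈ s, (t.filter (fun b => a < b)).card) % 2 = 0)

/-- Wedge product of two basis elements: concatenate the tuples and multiply the
signs (`0` if the tuples share an entry). -/
noncomputable def wB : XB → XB → Ext A
  | none, c => Finsupp.single c 1
  | some b, none => Finsupp.single (some b) 1
  | some (ε, s), some (δ, t) =>
      if s.1 ∩ t.1 = ∅ then bElem A ((ε == δ) == mergeEven s.1 t.1) (s.1 ∪ t.1) else 0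

/-- The wedge product on `⋀`, extended `A`-bilinearly from the basis. -/
noncomputable def wedge (u v : Ext A) : Ext A :=
  u.sum fun b a => v.sum fun c a' => (a * a') • wB A b c

/-- Extend a map defined on the basis `A`-linearly to all of `⋀`. -/
noncomputable def ext1 (g : XB → Ext A) (u : Ext A) : Ext A := u.sum fun b a => a • g b

/-- Quasi-zeros: elements of the form `w + (−)w`. -/
def IsQuasiZero (q : Ext A) : Prop := ∃ w : Ext A, q = w + neg A w

/-- The surpassing relation: `u ⪯ v` iff `v = u + q` for some quasi-zero `q`. -/
def Prec (u v : Ext A) : Prop := ∃ q : Ext A, IsQuasiZero A q ∧ v = u + q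

/-- Twist an element by a sign. -/
noncomputable def twist (ε : Bool) (u : Ext A) : Ext A := if ε then u else neg A u

/-- `k`-fold application of the negation map. -/
noncomputable def negpow (k : ℕ) (u : Ext A) : Ext A := if k % 2 = 0 then u else neg A u

/-- Wedge product of a list of elements of `⋀`. -/
noncomputable def wedgeL (l : List (Ext A)) : Ext A := l.foldr (wedge A) (one A)

/-- The wedge monomial `x^{j_1} ∧ ⋯ ∧ x^{j_r}` for an arbitrary tuple. -/
noncomputable def wedgeMon (l : List ℕ) : Ext A := wedgeL A (l.map (xg A))

/-- The decreasing enumeration of a finite set of naturals. -/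
def descList (s : Finset ℕ) : List ℕ := (s.sort (· ≤ ·)).reverse

/-- The contraction `∂^j ⌟` on basis elements:
`∂^j ⌟ (x^{i_1} ∧ ⋯ ∧ x^{i_r}) = Σ_k (−)^{k−1}[i_k = j]·x^{i_1} ∧ ⋯ ∧ x^{i_{k-1}} ∧ x^{i_{k+1}} ∧ ⋯ ∧ x^{i_r}`,
`∂^j ⌟ 1 = 0`; it commutes with the negation map. -/
noncomputable def contraB (j : ℕ) : XB → Ext A
  | none => 0
  | some (ε, s) =>
      if j ∈ s.1 then
        twist A ε (negpow A ((s.1.filter (fun b => j < b)).card) (bElem A true (s.1.erase j)))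
      else 0

/-- The contraction `∂^j ⌟` on `⋀`, extended `A`-linearly. -/
noncomputable def contra (j : ℕ) (u : Ext A) : Ext A := ext1 A (contraB A j) u

/-- Make an `A`-linear operator on `⋀` commuting with the negation map out of a
coefficient family on decreasing lists (`F k l` = the `k`-th coefficient on the
monomial with decreasing tuple `l`); the unit is sent to itself in degree `0`. -/
noncomputable def hsOn (F : ℕ → List ℕ → Ext A) (k : ℕ) : XB → Ext A
  | none => if k = 0 then one A else 0
  | some (ε, s) => twist A ε (F k (descList s.1))

open Finset.Nat in
/-- Coefficient of `z^k` in `σ₊(z)` on a monomial: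
`σ_k (x^{i_1} ∧ ⋯ ∧ x^{i_r}) = Σ_{k_1+⋯+k_r=k} x^{i_1+k_1} ∧ ⋯ ∧ x^{i_r+k_r}`. -/
noncomputable def sigPlusL (k : ℕ) (l : List ℕ) : Ext A :=
  ∑ c ∈ antidiagonalTuple l.length k,
    wedgeMon A (List.ofFn fun i : Fin l.length => l.get i + c i)

/-- Coefficient of `z^k` in the Schubert derivation `σ₊(z)`. -/
noncomputable def sigPlus (k : ℕ) : Ext A → Ext A := ext1 A (hsOn A (sigPlusL A) k)

open Finset.Nat in
/-- Coefficient of `w^{−k}` in `σ₋(w)`, where `σ₋(w) x^j = Σ_{k=0}^{j} x^{j−k} w^{−k}`. -/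
noncomputable def sigMinusL (k : ℕ) (l : List ℕ) : Ext A :=
  ∑ c ∈ antidiagonalTuple l.length k,
    if ∀ i, c i ≤ l.get i then
      wedgeMon A (List.ofFn fun i : Fin l.length => l.get i - c i)
    else 0

/-- Coefficient of `w^{−k}` in the Schubert derivation `σ₋(w)`. -/
noncomputable def sigMinus (k : ℕ) : Ext A → Ext A := ext1 A (hsOn A (sigMinusL A) k)

open Finset.Nat in
/-- Coefficient of `z^{−k}` in `σ̄₋(z)`, where `σ̄₋(z) x^j = x^j + ((−)x^{j−1}) z^{−1}`
(`x^{−1} := 0`). -/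
noncomputable def sbarMinusL (k : ℕ) (l : List ℕ) : Ext A :=
  negpow A k (∑ c ∈ antidiagonalTuple l.length k,
    if ∀ i, c i ≤ 1 ∧ c i ≤ l.get i then
      wedgeMon A (List.ofFn fun i : Fin l.length => l.get i - c i)
    else 0)

/-- Coefficient of `z^{−k}` in the Schubert derivation `σ̄₋(z)`. -/
noncomputable def sbarMinus (k : ℕ) : Ext A → Ext A := ext1 A (hsOn A (sbarMinusL A) k)

open Finset.Nat in
/-- Coefficient of `w^k` in `σ̄₊(w)`, where `σ̄₊(w) x^j = x^j + ((−)x^{j+1}) w`. -/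
noncomputable def sbarPlusL (k : ℕ) (l : List ℕ) : Ext A :=
  negpow A k (∑ c ∈ antidiagonalTuple l.length k,
    if ∀ i, c i ≤ 1 then
      wedgeMon A (List.ofFn fun i : Fin l.length => l.get i + c i)
    else 0)

/-- Coefficient of `w^k` in the Schubert derivation `σ̄₊(w)`. -/
noncomputable def sbarPlus (k : ℕ) : Ext A → Ext A := ext1 A (hsOn A (sbarPlusL A) k)

/-- The basis element `[x]^r_λ = x^{r−1+λ_1} ∧ x^{r−2+λ_2} ∧ ⋯ ∧ x^{λ_r}`
attached to a partition `λ` with at most `r` parts. -/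
noncomputable def xlam (r : ℕ) (lam : Fin r → ℕ) : Ext A :=
  wedgeMon A (List.ofFn fun i : Fin r => (r - 1 - (i : ℕ)) + lam i)

end ExtSemi

namespace ExtSemi

/-- strictly decreasing with upper bound -/
def sd : WithTop ℕ → List ℕ → Prop
  | _, [] => True
  | p, a :: l => (a : WithTop ℕ) < p ∧ sd a l

theorem sd_mono {p q : WithTop ℕ} (h : p ≤ q) : ∀ {l : List ℕ}, sd p l → sd q l
  | [], _ => trivial
  | _ :: _, hl => ⟨lt_of_lt_of_le hl.1 h, hl.2⟩

theorem sd_lt : ∀ {l : List ℕ} {p : WithTop ℕ}, sd p l → ∀ x ∈ l, (x : WithTop ℕ) < p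
  | [], _, _ => by simp
  | a :: l, p, h => by
      intro x hx
      rcases List.mem_cons.1 hx with rfl | hx
      · exact h.1
      · exact lt_trans (sd_lt h.2 x hx) h.1

theorem ctop (n : ℕ) : (n : WithTop ℕ) < ⊤ := WithTop.coe_lt_top n

section core
variable {M : Type*} [AddCommMonoid M]

/-- generating sum, plus -/
def sPg (w : M →+ M) : List ℕ → (List ℕ → M) → M
  | [], φ => φ []
  | a :: l, φ => sPg w l (fun ν => φ (a :: ν)) + w (sPg w l (fun ν => φ ((a + 1) :: ν)))

/-- generating sum, minus -/
def sMg (z : M →+ M) : List ℕ → (List ℕ → M) → M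
  | [], φ => φ []
  | a :: l, φ => sMg z l (fun ν => φ (a :: ν)) +
      (if a = 0 then 0 else z (sMg z l (fun ν => φ ((a - 1) :: ν))))

theorem sPg_zero (w : M →+ M) : ∀ l : List ℕ, sPg w l (fun _ => 0) = 0
  | [] => rfl
  | a :: l => by simp [sPg, sPg_zero w l]

theorem sMg_zero (w : M →+ M) : ∀ l : List ℕ, sMg w l (fun _ => 0) = 0
  | [] => rfl
  | a :: l => by simp [sMg, sMg_zero w l]

theorem sPg_add (w : M →+ M) : ∀ (l : List ℕ) (φ φ' : List ℕ → M),
    sPg w l (fun ν => φ ν + φ' ν) = sPg w l φ + sPg w l φ'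
  | [], _, _ => rfl
  | a :: l, φ, φ' => by
      simp only [sPg]
      rw [sPg_add w l (fun ν => φ (a :: ν)), sPg_add w l (fun ν => φ ((a+1) :: ν)), map_add]
      abel

theorem sMg_add (w : M →+ M) : ∀ (l : List ℕ) (φ φ' : List ℕ → M),
    sMg w l (fun ν => φ ν + φ' ν) = sMg w l φ + sMg w l φ'
  | [], _, _ => rfl
  | a :: l, φ, φ' => by
      simp only [sMg]
      rw [sMg_add w l (fun ν => φ (a :: ν)), sMg_add w l (fun ν => φ ((a-1) :: ν)), map_add]
      split_ifs
      · simp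
      · abel

theorem sPg_map (w f : M →+ M) (h : ∀ x, f (w x) = w (f x)) : ∀ (l : List ℕ) (φ : List ℕ → M),
    sPg w l (fun ν => f (φ ν)) = f (sPg w l φ)
  | [], _ => rfl
  | a :: l, φ => by
      simp only [sPg]
      rw [sPg_map w f h l (fun ν => φ (a :: ν)), sPg_map w f h l (fun ν => φ ((a+1) :: ν)), map_add,
        h]

theorem sMg_map (w f : M →+ M) (h : ∀ x, f (w x) = w (f x)) : ∀ (l : List ℕ) (φ : List ℕ → M),
    sMg w l (fun ν => f (φ ν)) = f (sMg w l φ)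
  | [], _ => rfl
  | a :: l, φ => by
      simp only [sMg]
      rw [sMg_map w f h l (fun ν => φ (a :: ν)), sMg_map w f h l (fun ν => φ ((a-1) :: ν)), map_add]
      split_ifs
      · simp
      · rw [h]

open Classical in
/-- up then down -/
noncomputable def up (z w : M →+ M) (p : WithTop ℕ) (l : List ℕ) (ψ : List ℕ → M) : M :=
  sPg w l (fun ν => if sd p ν then sMg z ν ψ else 0)

open Classical in
/-- down then up -/
noncomputable def dn (z w : M →+ M) (p : WithTop ℕ) (l : List ℕ) (ψ : List ℕ → M) : M :=
  sMg z l (fun ν => if sd p ν then sPg w ν ψ else 0)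

variable (z w : M →+ M)

theorem up_nil (p : WithTop ℕ) (ψ : List ℕ → M) : up z w p [] ψ = ψ [] := by
  simp [up, sPg, sMg, sd]

theorem dn_nil (p : WithTop ℕ) (ψ : List ℕ → M) : dn z w p [] ψ = ψ [] := by
  simp [dn, sPg, sMg, sd]

theorem up_aux (hzw : ∀ x, z (w x) = w (z x)) (a : ℕ) (l : List ℕ) (p : WithTop ℕ)
    (ψ : List ℕ → M) [DecidablePred (sd p)] :
    sPg w l (fun ν => if sd p (ν) then sMg z (a :: ν) ψ else 0)
      = up z w p l (fun ν => ψ (a :: ν)) +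
        (if a = 0 then 0 else z (up z w p l (fun ν => ψ ((a - 1) :: ν)))) := by
  classical
  have : (fun ν => if sd p ν then sMg z (a :: ν) ψ else 0) = fun ν =>
      (if sd p ν then sMg z ν (fun ν => ψ (a :: ν)) else 0) +
      (if a = 0 then 0 else z ((if sd p ν then sMg z ν (fun ν => ψ ((a - 1) :: ν)) else 0))) := by
    funext ν
    by_cases h : sd p ν <;> simp [h, sMg]
  rw [this, sPg_add]
  unfold up
  congr 1
  · congr! 3
  · split_ifs
    · exact sPg_zero w l
    · rw [sPg_map w z hzw]
      congr! 4

theorem dn_aux (hzw : ∀ x, z (w x) = w (z x)) (a : ℕ) (l : List ℕ) (p : WithTop ℕ)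
    (ψ : List ℕ → M) [DecidablePred (sd p)] :
    sMg z l (fun ν => if sd p (ν) then sPg w (a :: ν) ψ else 0)
      = dn z w p l (fun ν => ψ (a :: ν)) +
        (w (dn z w p l (fun ν => ψ ((a + 1) :: ν)))) := by
  classical
  have : (fun ν => if sd p ν then sPg w (a :: ν) ψ else 0) = fun ν =>
      (if sd p ν then sPg w ν (fun ν => ψ (a :: ν)) else 0) +
      (w ((if sd p ν then sPg w ν (fun ν => ψ ((a + 1) :: ν)) else 0))) := by
    funext ν
    by_cases h : sd p ν <;> simp [h, sPg]
  rw [this, sMg_add]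
  unfold dn
  congr 1
  · congr! 3
  · rw [sMg_map z w (fun x => (hzw x).symm)]
    congr! 4

open Classical in
theorem up_cons (hzw : ∀ x, z (w x) = w (z x)) (a : ℕ) (l : List ℕ) (p : WithTop ℕ)
    (ψ : List ℕ → M) :
    up z w p (a :: l) ψ =
      (if (a : WithTop ℕ) < p then up z w a l (fun ν => ψ (a :: ν)) +
        (if a = 0 then 0 else z (up z w a l (fun ν => ψ ((a - 1) :: ν)))) else 0) +
      (if ((a + 1 : ℕ) : WithTop ℕ) < p then
        w (up z w (a + 1 : ℕ) l (fun ν => ψ ((a + 1) :: ν)) +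
          z (up z w (a + 1 : ℕ) l (fun ν => ψ (a :: ν)))) else 0) := by
  rw [up, sPg]
  congr 1
  · by_cases h : (a : WithTop ℕ) < p
    · rw [if_pos h, ← up_aux z w hzw]
      simp only [sd, h, true_and]
    · simp only [sd, h, false_and, if_false, sPg_zero]
  · by_cases h : ((a + 1 : ℕ) : WithTop ℕ) < p
    · have := up_aux z w hzw (a + 1) l (a + 1 : ℕ) ψ
      simp only [Nat.add_sub_cancel, Nat.succ_ne_zero, if_false] at this
      rw [if_pos h, ← this]
      simp only [sd, h, true_and]
    · simp only [sd, h, false_and, if_false, sPg_zero, map_zero]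

open Classical in
theorem dn_cons (hzw : ∀ x, z (w x) = w (z x)) (a : ℕ) (l : List ℕ) (p : WithTop ℕ)
    (ψ : List ℕ → M) :
    dn z w p (a :: l) ψ =
      (if (a : WithTop ℕ) < p then dn z w a l (fun ν => ψ (a :: ν)) +
        w (dn z w a l (fun ν => ψ ((a + 1) :: ν))) else 0) +
      (if a = 0 then 0 else if ((a - 1 : ℕ) : WithTop ℕ) < p then
        z (dn z w (a - 1 : ℕ) l (fun ν => ψ ((a - 1) :: ν)) +
          w (dn z w (a - 1 : ℕ) l (fun ν => ψ (a :: ν)))) else 0) := by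
  rw [dn, sMg]
  congr 1
  · by_cases h : (a : WithTop ℕ) < p
    · rw [if_pos h, ← dn_aux z w hzw]
      simp only [sd, h, true_and]
    · simp only [sd, h, false_and, if_false, sMg_zero]
  · by_cases h0 : a = 0
    · simp [h0]
    rw [if_neg h0, if_neg h0]
    by_cases h : ((a - 1 : ℕ) : WithTop ℕ) < p
    · have := dn_aux z w hzw (a - 1) l (a - 1 : ℕ) ψ
      rw [Nat.sub_add_cancel (Nat.pos_of_ne_zero h0)] at this
      rw [if_pos h, ← this]
      simp only [sd, h, true_and]
    · simp only [sd, h, false_and, if_false, sMg_zero, map_zero]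

/-- admissible targets -/
def Good (ψ : List ℕ → M) : Prop := ∀ μ, (¬ sd ⊤ μ ∨ 0 ∈ μ) → ψ μ = 0

/-- vanishing on lists with head at least `n` -/
def Van (n : ℕ) (ψ : List ℕ → M) : Prop := ∀ m μ, n ≤ m → ψ (m :: μ) = 0

theorem Good.cons {ψ : List ℕ → M} (h : Good ψ) (m : ℕ) : Good (fun ν => ψ (m :: ν)) := by
  intro μ hμ
  apply h
  rcases hμ with hμ | hμ
  · left
    intro h'
    exact hμ (sd_mono le_top h'.2)
  · right; simp [hμ]

theorem Good.van {ψ : List ℕ → M} (h : Good ψ) (m : ℕ) : Van m (fun ν => ψ (m :: ν)) := by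
  intro k μ hk
  apply h
  left
  intro h'
  have := h'.2.1
  norm_cast at this
  omega

theorem Van.mono {ψ : List ℕ → M} {m n : ℕ} (h : Van m ψ) (hmn : m ≤ n) : Van n ψ :=
  fun k μ hk => h k μ (hmn.trans hk)

theorem up_zero (p : WithTop ℕ) (l : List ℕ) : up z w p l (fun _ => 0) = 0 := by
  simp [up, sMg_zero, sPg_zero]

theorem dn_zero (p : WithTop ℕ) (l : List ℕ) : dn z w p l (fun _ => 0) = 0 := by
  simp [dn, sMg_zero, sPg_zero]

theorem up_big (hzw : ∀ x, z (w x) = w (z x)) {b p : ℕ} (h : b + 2 ≤ p) (l : List ℕ)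
    (ψ : List ℕ → M) : up z w p (b :: l) ψ = up z w ⊤ (b :: l) ψ := by
  have h1 : ((b : ℕ) : WithTop ℕ) < p := by norm_cast; omega
  have h2 : ((b + 1 : ℕ) : WithTop ℕ) < p := by norm_cast
  rw [up_cons z w hzw, up_cons z w hzw, if_pos h1, if_pos h2, if_pos (ctop _),
    if_pos (ctop _)]

theorem dn_big (hzw : ∀ x, z (w x) = w (z x)) {b p : ℕ} (h : b + 1 ≤ p) (l : List ℕ)
    (ψ : List ℕ → M) : dn z w p (b :: l) ψ = dn z w ⊤ (b :: l) ψ := by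
  have h1 : ((b : ℕ) : WithTop ℕ) < p := by norm_cast
  have h2 : ((b - 1 : ℕ) : WithTop ℕ) < p := by norm_cast; omega
  rw [dn_cons z w hzw, dn_cons z w hzw, if_pos h1, if_pos h2, if_pos (ctop _),
    if_pos (ctop _)]

theorem core (hzw : ∀ x, z (w x) = w (z x)) : ∀ (l : List ℕ) (a : ℕ), sd a l →
    ∀ ψ : List ℕ → M, Good ψ →
    up z w ⊤ (a :: l) ψ = dn z w ⊤ (a :: l) ψ ∧
    (Van (a + 1) ψ → up z w (a + 1 : ℕ) (a :: l) ψ + z (w (up z w ⊤ (a :: l) ψ)) =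
      dn z w ⊤ (a :: l) ψ + z (w (dn z w a (a :: l) ψ))) ∧
    (Van a ψ → up z w (a + 1 : ℕ) (a :: l) ψ = dn z w a (a :: l) ψ) := by
  intro l
  induction l with
  | nil =>
    intro a _ ψ hψ
    have t1 : ((a : ℕ) : WithTop ℕ) < (a + 1 : ℕ) := by norm_cast; omega
    rcases Nat.eq_zero_or_pos a with rfl | ha
    · have h0 : ψ [0] = 0 := hψ _ (by simp)
      refine ⟨?_, fun hv => ?_, fun hv => ?_⟩
      · simp [up_cons z w hzw, dn_cons z w hzw, up_nil, dn_nil, h0]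
      · have h1 : ψ [1] = 0 := hv _ _ le_rfl
        simp [up_cons z w hzw, dn_cons z w hzw, up_nil, dn_nil, h0, h1]
      · simp [up_cons z w hzw, dn_cons z w hzw, up_nil, dn_nil, h0]
    · have ha' : a ≠ 0 := by omega
      have t2 : ((a - 1 : ℕ) : WithTop ℕ) < a := by norm_cast; omega
      refine ⟨?_, fun hv => ?_, fun hv => ?_⟩
      · simp only [up_cons z w hzw, dn_cons z w hzw, up_nil, dn_nil, ctop, if_true,
          ha', if_false, map_add, hzw]
        abel
      · have h1 : ψ [a+1] = 0 := hv _ _ le_rfl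
        simp only [up_cons z w hzw, dn_cons z w hzw, up_nil, dn_nil, ctop, if_true,
          ha', if_false, map_add, hzw, lt_self_iff_false, t1, t2, h1, map_zero, add_zero, zero_add]
        abel
      · have h1 : ψ [a] = 0 := hv _ _ le_rfl
        simp only [up_cons z w hzw, dn_cons z w hzw, up_nil, dn_nil, if_true,
          ha', if_false, lt_self_iff_false, t1, t2, h1, map_zero, add_zero, zero_add]
  | cons b l ih =>
    intro a hab ψ hψ
    have hba : b < a := by have := hab.1; norm_cast at this
    have ih := ih b hab.2
    have t1 : ((a : ℕ) : WithTop ℕ) < (a + 1 : ℕ) := by norm_cast; omega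
    have ha' : a ≠ 0 := by omega
    have t2 : ((a - 1 : ℕ) : WithTop ℕ) < a := by norm_cast; omega
    rcases (show a = b + 1 ∨ b + 2 ≤ a by omega) with rfl | hgap
    · have e1 : b + 1 - 1 = b := rfl
      have B1 := fun ψ => up_big z w hzw (b := b) (p := b + 1 + 1) le_rfl l ψ
      have B2 := fun ψ => dn_big z w hzw (b := b) (p := b + 1) le_rfl l ψ
      obtain ⟨a1, a2, -⟩ := ih _ (hψ.cons (b + 1))
      have a2 := a2 (hψ.van _)
      obtain ⟨b1, -, b3⟩ := ih _ (hψ.cons b)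
      have b3 := b3 (hψ.van _)
      obtain ⟨c1, -, -⟩ := ih _ (hψ.cons (b + 1 + 1))
      rw [e1] at t2
      refine ⟨?_, fun hv => ?_, fun hv => ?_⟩
      · simp only [up_cons z w hzw (b+1), dn_cons z w hzw (b+1), ctop, if_true,
          ha', if_false, map_add, B1, B2, e1, b3, c1]
        simp only [hzw] at a2 ⊢
        generalize w (dn z w ⊤ (b :: l) fun ν => ψ ((b + 1 + 1) :: ν)) = Y
        generalize z (dn z w b (b :: l) fun ν => ψ (b :: ν)) = X
        generalize (up z w (b + 1 : ℕ) (b :: l) fun ν => ψ ((b + 1) :: ν)) = P at *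
        generalize w (z (up z w ⊤ (b :: l) fun ν => ψ ((b + 1) :: ν))) = Q at *
        calc P + X + (Y + Q) = (P + Q) + (X + Y) := by abel
          _ = _ := by rw [a2]; abel
      · have v1 : (fun ν => ψ ((b + 1 + 1) :: ν)) = fun _ => 0 := by
          funext ν; exact hv _ _ le_rfl
        simp only [up_cons z w hzw (b+1), dn_cons z w hzw (b+1), ctop, if_true, lt_self_iff_false,
          ha', if_false, map_add, B1, B2, e1, b3, v1, up_zero, dn_zero, t1, t2, map_zero, add_zero,
          zero_add, hzw] at a2 ⊢
        have a4 := congrArg (fun x => w (z x)) a2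
        have a5 := congrArg (fun x => w (z x)) a1
        simp only [map_add, hzw] at a4 a5
        generalize (up z w (b + 1 : ℕ) (b :: l) fun ν => ψ ((b + 1) :: ν)) = P at *
        generalize w (z (up z w ⊤ (b :: l) fun ν => ψ ((b + 1) :: ν))) = Q at *
        generalize w (w (z (z (up z w ⊤ (b :: l) fun ν => ψ ((b + 1) :: ν))))) = Q2 at *
        generalize z (dn z w b (b :: l) fun ν => ψ (b :: ν)) = X
        generalize w (w (z (z (dn z w b (b :: l) fun ν => ψ ((b + 1) :: ν))))) = S at *
        calc P + X + (w (z P) + w (z X) + Q2) = P + (w (z P) + Q2) + X + w (z X) := by abel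
          _ = (P + Q) + S + X + w (z X) := by rw [a4, ← a5]; abel
          _ = _ := by rw [a2]; abel
      · have v1 : (fun ν => ψ ((b + 1 + 1) :: ν)) = fun _ => 0 := by
          funext ν; exact hv _ _ (by omega)
        have v2 : (fun ν => ψ ((b + 1) :: ν)) = fun _ => 0 := by
          funext ν; exact hv _ _ (by omega)
        simp only [up_cons z w hzw (b+1), dn_cons z w hzw (b+1), if_true, lt_self_iff_false,
          ha', if_false, map_add, e1, b3, v2, up_zero, dn_zero, t1, t2, map_zero, add_zero,
          zero_add]
    · have B1 := fun ψ => up_big z w hzw (b := b) (p := a) hgap l ψ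
      have B1' := fun ψ => up_big z w hzw (b := b) (p := a + 1) (by omega) l ψ
      have B2 := fun ψ => dn_big z w hzw (b := b) (p := a) (by omega) l ψ
      have B2' := fun ψ => dn_big z w hzw (b := b) (p := a - 1) (by omega) l ψ
      have a1 := (ih _ (hψ.cons a)).1
      have b1 := (ih _ (hψ.cons (a - 1))).1
      have c1 := (ih _ (hψ.cons (a + 1))).1
      refine ⟨?_, fun hv => ?_, fun hv => ?_⟩
      · simp only [up_cons z w hzw a, dn_cons z w hzw a, ctop, if_true,
          ha', if_false, map_add, B1, B2, B1', B2', a1, b1, c1, hzw]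
        abel
      · have v1 : (fun ν => ψ ((a + 1) :: ν)) = fun _ => 0 := by
          funext ν; exact hv _ _ le_rfl
        simp only [up_cons z w hzw a, dn_cons z w hzw a, ctop, if_true, lt_self_iff_false, t1, t2,
          ha', if_false, map_add, B1, B2, B1', B2', a1, b1, hzw, v1, up_zero, dn_zero, map_zero,
          add_zero, zero_add]
        abel
      · have v2 : (fun ν => ψ (a :: ν)) = fun _ => 0 := by
          funext ν; exact hv _ _ (by omega)
        simp only [up_cons z w hzw a, dn_cons z w hzw a, if_true, lt_self_iff_false, t1, t2,
          ha', if_false, B1, B2', b1, v2, up_zero, dn_zero, map_zero,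
          add_zero, zero_add]

end core
end ExtSemi
namespace ExtSemi

section tuples
variable {E : Type*} [AddCommMonoid E]
open Finset.Nat

theorem sum_tuple_succ (n k : ℕ) (F : (Fin (n + 1) → ℕ) → E) :
    ∑ c ∈ antidiagonalTuple (n + 1) k, F c =
      ∑ i ∈ Finset.range (k + 1), ∑ c ∈ antidiagonalTuple n (k - i), F (Fin.cons i c) := by
  rw [Finset.sum_sigma']
  refine Finset.sum_bij' (fun c _ => ⟨c 0, Fin.tail c⟩) (fun x _ => Fin.cons x.1 x.2) ?_ ?_ ?_ ?_ ?_
  · intro c hc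
    rw [mem_antidiagonalTuple, Fin.sum_univ_succ] at hc
    simp only [Finset.mem_sigma, Finset.mem_range, mem_antidiagonalTuple, Fin.tail]
    omega
  · rintro ⟨i, c⟩ hc
    simp only [Finset.mem_sigma, Finset.mem_range, mem_antidiagonalTuple] at hc
    simp only [mem_antidiagonalTuple, Fin.sum_univ_succ, Fin.cons_zero, Fin.cons_succ]
    omega
  · intro c _
    simp
  · rintro ⟨i, c⟩ _
    simp
  · intro c _
    simp

theorem sum_tuple_zero (k : ℕ) (F : (Fin 0 → ℕ) → E) :
    ∑ c ∈ antidiagonalTuple 0 k, F c = if k = 0 then F ![] else 0 := by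
  cases k with
  | zero => simp
  | succ k => simp

theorem sum_tuple_succ' (n k : ℕ) (F : (Fin (n + 1) → ℕ) → E)
    (h : ∀ i c, F (Fin.cons (i + 2) c) = 0) :
    ∑ c ∈ antidiagonalTuple (n + 1) k, F c =
      ∑ c ∈ antidiagonalTuple n k, F (Fin.cons 0 c) +
      (if k = 0 then 0 else ∑ c ∈ antidiagonalTuple n (k - 1), F (Fin.cons 1 c)) := by
  rw [sum_tuple_succ]
  cases k with
  | zero => simp
  | succ k =>
    rw [Finset.sum_range_succ', Finset.sum_range_succ', Finset.sum_eq_zero]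
    · simp [add_comm]
    · intro i _
      exact Finset.sum_eq_zero (fun c _ => h _ _)

/-- index sum, plus -/
def TP (k : ℕ) (l : List ℕ) (φ : List ℕ → E) : E :=
  ∑ c ∈ antidiagonalTuple l.length k,
    if ∀ i, c i ≤ 1 then φ (List.ofFn fun i : Fin l.length => l.get i + c i) else 0

/-- index sum, minus -/
def TM (k : ℕ) (l : List ℕ) (φ : List ℕ → E) : E :=
  ∑ c ∈ antidiagonalTuple l.length k,
    if ∀ i, c i ≤ 1 ∧ c i ≤ l.get i then
      φ (List.ofFn fun i : Fin l.length => l.get i - c i) else 0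

theorem TP_nil (k : ℕ) (φ : List ℕ → E) : TP k [] φ = if k = 0 then φ [] else 0 := by
  unfold TP
  refine (sum_tuple_zero k _).trans ?_
  simp

theorem TM_nil (k : ℕ) (φ : List ℕ → E) : TM k [] φ = if k = 0 then φ [] else 0 := by
  unfold TM
  refine (sum_tuple_zero k _).trans ?_
  simp

theorem TP_cons (k a : ℕ) (l : List ℕ) (φ : List ℕ → E) :
    TP k (a :: l) φ = TP k l (fun ν => φ (a :: ν)) +
      (if k = 0 then 0 else TP (k - 1) l (fun ν => φ ((a + 1) :: ν))) := by
  unfold TP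
  refine (sum_tuple_succ' l.length k _ ?_).trans ?_
  · intro i c
    rw [if_neg]
    intro h
    have := h 0
    simp at this
  · simp [Fin.forall_fin_succ, List.ofFn_succ]

theorem TM_cons (k a : ℕ) (l : List ℕ) (φ : List ℕ → E) :
    TM k (a :: l) φ = TM k l (fun ν => φ (a :: ν)) +
      (if k = 0 then 0 else if a = 0 then 0 else TM (k - 1) l (fun ν => φ ((a - 1) :: ν))) := by
  unfold TM
  refine (sum_tuple_succ' l.length k _ ?_).trans ?_
  · intro i c
    rw [if_neg]
    intro h
    have := (h 0).1
    simp at this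
  · by_cases ha : a = 0
    · simp [Fin.forall_fin_succ, List.ofFn_succ, ha]
    · have : 1 ≤ a := by omega
      simp [Fin.forall_fin_succ, List.ofFn_succ, ha, this]

theorem TP_congr {φ φ' : List ℕ → E} : ∀ (l : List ℕ) (k : ℕ) (φ φ' : List ℕ → E),
    (∀ ν, List.Forall₂ (fun a b => a ≤ b ∧ b ≤ a + 1) l ν → φ ν = φ' ν) → TP k l φ = TP k l φ'
  | [], k, φ, φ', h => by rw [TP_nil, TP_nil, h [] .nil]
  | a :: l, k, φ, φ', h => by
      rw [TP_cons, TP_cons]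
      congr 1
      · exact TP_congr (φ := φ) (φ' := φ') l _ _ _ (fun ν hν => h _ (.cons (by omega) hν))
      · split_ifs
        · rfl
        · exact TP_congr (φ := φ) (φ' := φ') l _ _ _ (fun ν hν => h _ (.cons (by omega) hν))

theorem TM_congr {φ φ' : List ℕ → E} : ∀ (l : List ℕ) (k : ℕ) (φ φ' : List ℕ → E),
    (∀ ν, List.Forall₂ (fun a b => b ≤ a ∧ a ≤ b + 1) l ν → φ ν = φ' ν) → TM k l φ = TM k l φ'
  | [], k, φ, φ', h => by rw [TM_nil, TM_nil, h [] .nil]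
  | a :: l, k, φ, φ', h => by
      rw [TM_cons, TM_cons]
      congr 1
      · exact TM_congr (φ := φ) (φ' := φ') l _ _ _ (fun ν hν => h _ (.cons (by omega) hν))
      · split_ifs
        · rfl
        · rfl
        · exact TM_congr (φ := φ) (φ' := φ') l _ _ _ (fun ν hν => h _ (.cons (by omega) hν))

theorem TP_map {E' : Type*} [AddCommMonoid E'] (f : E →+ E') (k : ℕ) (l : List ℕ)
    (φ : List ℕ → E) : f (TP k l φ) = TP k l (fun ν => f (φ ν)) := by
  unfold TP
  rw [map_sum]
  refine Finset.sum_congr rfl fun c _ => ?_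
  split_ifs <;> simp

theorem TM_map {E' : Type*} [AddCommMonoid E'] (f : E →+ E') (k : ℕ) (l : List ℕ)
    (φ : List ℕ → E) : f (TM k l φ) = TM k l (fun ν => f (φ ν)) := by
  unfold TM
  rw [map_sum]
  refine Finset.sum_congr rfl fun c _ => ?_
  split_ifs <;> simp

/-- shift in the first index -/
def shz : (ℕ → ℕ → E) →+ (ℕ → ℕ → E) where
  toFun f d e := if d = 0 then 0 else f (d - 1) e
  map_zero' := by funext d e; simp
  map_add' f g := by
    funext d e
    by_cases h : d = 0 <;> simp [h]

/-- shift in the second index -/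
def shw : (ℕ → ℕ → E) →+ (ℕ → ℕ → E) where
  toFun f d e := if e = 0 then 0 else f d (e - 1)
  map_zero' := by funext d e; simp
  map_add' f g := by
    funext d e
    by_cases h : e = 0 <;> simp [h]

theorem shz_apply (f : ℕ → ℕ → E) (d e : ℕ) :
    shz f d e = if d = 0 then 0 else f (d - 1) e := rfl

theorem shw_apply (f : ℕ → ℕ → E) (d e : ℕ) :
    shw f d e = if e = 0 then 0 else f d (e - 1) := rfl

theorem sPg_eval (d : ℕ) : ∀ (l : List ℕ) (e : ℕ) (Φ : List ℕ → ℕ → ℕ → E),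
    (∀ ν e, e ≠ 0 → Φ ν d e = 0) → sPg shw l Φ d e = TP e l (fun ν => Φ ν d 0)
  | [], e, Φ, h => by
      rw [TP_nil, sPg]
      split_ifs with h0
      · rw [h0]
      · exact h _ _ h0
  | a :: l, e, Φ, h => by
      rw [TP_cons, sPg]
      rw [Pi.add_apply, Pi.add_apply, shw_apply]
      rw [sPg_eval d l e _ (fun ν e => h _ e), sPg_eval d l (e - 1) _ (fun ν e => h _ e)]

theorem sMg_eval (e : ℕ) : ∀ (l : List ℕ) (d : ℕ) (Φ : List ℕ → ℕ → ℕ → E),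
    (∀ ν d, d ≠ 0 → Φ ν d e = 0) → sMg shz l Φ d e = TM d l (fun ν => Φ ν 0 e)
  | [], d, Φ, h => by
      rw [TM_nil, sMg]
      split_ifs with h0
      · rw [h0]
      · exact h _ _ h0
  | a :: l, d, Φ, h => by
      rw [TM_cons, sMg]
      by_cases ha : a = 0
      · simp [ha, ← sMg_eval e l d (fun ν => Φ (0 :: ν)) (fun ν e => h _ e)]
      rw [if_neg ha, if_neg ha]
      rw [Pi.add_apply, Pi.add_apply, shz_apply]
      rw [sMg_eval e l d _ (fun ν e => h _ e), sMg_eval e l (d - 1) _ (fun ν e => h _ e)]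

theorem TP_zero (k : ℕ) (l : List ℕ) : TP k l (fun _ => (0 : E)) = 0 := by simp [TP]
theorem TM_zero (k : ℕ) (l : List ℕ) : TM k l (fun _ => (0 : E)) = 0 := by simp [TM]

open Classical in
theorem key (d e : ℕ) (l : List ℕ) (hl : sd ⊤ l) (ψ : List ℕ → E) (hψ : Good ψ) :
    TP e l (fun ν => if sd ⊤ ν then TM d ν ψ else 0) =
      TM d l (fun ν => if sd ⊤ ν then TP e ν ψ else 0) := by
  let Ψ : List ℕ → ℕ → ℕ → E := fun μ d e => if d = 0 ∧ e = 0 then ψ μ else 0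
  have hΨ : Good Ψ := by
    intro μ hμ
    funext d e
    simp [Ψ, hψ μ hμ]
  have hzw : ∀ x : ℕ → ℕ → E, shz (shw x) = shw (shz x) := by
    intro x
    funext d e
    simp only [shz, shw, AddMonoidHom.coe_mk, ZeroHom.coe_mk]
    split_ifs <;> rfl
  have h1 : ∀ ν d e, sMg shz ν Ψ d e = if e = 0 then TM d ν ψ else 0 := by
    intro ν d e
    rw [sMg_eval]
    · by_cases he : e = 0 <;> simp [Ψ, he, TM_zero]
    · intro ν d hd
      simp [Ψ, hd]
  have h2 : ∀ ν d e, sPg shw ν Ψ d e = if d = 0 then TP e ν ψ else 0 := by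
    intro ν d e
    rw [sPg_eval]
    · by_cases he : d = 0 <;> simp [Ψ, he, TP_zero]
    · intro ν d hd
      simp [Ψ, hd]
  have H : up shz shw ⊤ l Ψ = dn shz shw ⊤ l Ψ := by
    cases l with
    | nil => rw [up_nil, dn_nil]
    | cons a l => exact (core shz shw hzw l a hl.2 Ψ hΨ).1
  have H := congrFun (congrFun H d) e
  unfold up dn at H
  rw [sPg_eval, sMg_eval] at H
  · convert H using 2
    · funext ν
      split_ifs <;> simp [h1]
    · funext ν
      split_ifs <;> simp [h2]
  · intro ν d hd
    split_ifs <;> simp [h2, hd]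
  · intro ν d hd
    split_ifs <;> simp [h1, hd]

end tuples
end ExtSemi
namespace ExtSemi

section extside
variable (A : Type*) [CommSemiring A]

theorem neg_single (b : XB) (a : A) :
    neg A (Finsupp.single b a) = Finsupp.single (negB b) a := by
  simp [neg]

theorem neg_neg' (u : Ext A) : neg A (neg A u) = u := by
  induction u using Finsupp.induction_linear with
  | zero => simp
  | add f g hf hg => simp only [map_add, hf, hg]
  | single b a =>
    rw [neg_single, neg_single]
    rcases b with _ | ⟨ε, s⟩ <;> simp [negB]

/-- `negpow` as an additive map -/
noncomputable def npH (k : ℕ) : Ext A →+ Ext A :=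
  if k % 2 = 0 then AddMonoidHom.id _ else (neg A).toAddMonoidHom

theorem npH_eq (k : ℕ) (u : Ext A) : negpow A k u = npH A k u := by
  unfold negpow npH
  split_ifs <;> rfl

theorem npH_comm (d e : ℕ) (u : Ext A) : npH A d (npH A e u) = npH A e (npH A d u) := by
  unfold npH
  split_ifs <;> rfl

theorem ext1_eq (g : XB → Ext A) (u : Ext A) : ext1 A g u = Finsupp.linearCombination A g u := rfl

theorem hs_neg (F : ℕ → List ℕ → Ext A) (k : ℕ) (u : Ext A) :
    ext1 A (hsOn A F k) (neg A u) = neg A (ext1 A (hsOn A F k) u) := by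
  simp only [ext1_eq]
  induction u using Finsupp.induction_linear with
  | zero => simp
  | add f g hf hg => simp only [map_add, hf, hg]
  | single b a =>
    rw [neg_single, Finsupp.linearCombination_single, Finsupp.linearCombination_single, map_smul]
    congr 1
    rcases b with _ | ⟨ε, s⟩
    · simp only [negB, hsOn]
      split_ifs
      · simp [one, neg_single, negB]
      · simp
    · cases ε <;> simp [negB, hsOn, twist, neg_neg']

theorem hs_npH (F : ℕ → List ℕ → Ext A) (k j : ℕ) (u : Ext A) :
    ext1 A (hsOn A F k) (npH A j u) = npH A j (ext1 A (hsOn A F k) u) := by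
  unfold npH
  split_ifs
  · rfl
  · exact hs_neg A F k u

/-- right multiplication as an additive map -/
noncomputable def wR (v : Ext A) : Ext A →+ Ext A where
  toFun u := wedge A u v
  map_zero' := by simp [wedge]
  map_add' f g := by
    unfold wedge
    rw [Finsupp.sum_add_index']
    · intro b; simp
    · intro b a a'
      simp [add_mul, add_smul, Finsupp.sum_add]

theorem wedge_zero' (u : Ext A) : wedge A u 0 = 0 := by simp [wedge]

theorem wedge_single (b c : XB) :
    wedge A (Finsupp.single b 1) (Finsupp.single c 1) = wB A b c := by
  simp [wedge]

theorem bElem_ne (ε : Bool) {t : Finset ℕ} (h : t.Nonempty) :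
    bElem A ε t = Finsupp.single (some (ε, ⟨t, h⟩)) 1 := by simp [bElem, h]

theorem bElem_empty (ε : Bool) : bElem A ε ∅ = one A := by simp [bElem, one]

theorem wedge_x_mem {a : ℕ} {s : Finset ℕ} (h : a ∈ s) :
    wedge A (xg A a) (bElem A true s) = 0 := by
  rw [xg, bElem_ne A _ (Finset.singleton_nonempty a), bElem_ne A _ ⟨a, h⟩, wedge_single]
  simp [wB, h]

theorem wedge_x_lt {a : ℕ} {s : Finset ℕ} (h : ∀ x ∈ s, x < a) :
    wedge A (xg A a) (bElem A true s) = bElem A true (insert a s) := by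
  have ha : a ∉ s := fun h' => lt_irrefl _ (h _ h')
  rcases s.eq_empty_or_nonempty with rfl | hs
  · rw [xg, bElem_ne A _ (Finset.singleton_nonempty a), bElem_empty, one, wedge_single]
    simp [wB, bElem]
  · rw [xg, bElem_ne A _ (Finset.singleton_nonempty a), bElem_ne A _ hs, wedge_single]
    have hf : s.filter (fun b => a < b) = ∅ := by
      ext x
      simp only [Finset.mem_filter, Finset.notMem_empty, iff_false, not_and, not_lt]
      exact fun hx => (h x hx).le
    simp [wB, ha, mergeEven, hf]

theorem wedge_x0 (ε : Bool) {s : Finset ℕ} (h : 0 ∈ s) :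
    wedge A (bElem A ε s) (xg A 0) = 0 := by
  rw [xg, bElem_ne A _ (Finset.singleton_nonempty 0), bElem_ne A _ ⟨0, h⟩, wedge_single]
  simp [wB, h]

open Classical in
theorem wedgeMon_eq : ∀ l : List ℕ, l.Pairwise (· ≥ ·) →
    wedgeMon A l = if sd ⊤ l then bElem A true l.toFinset else 0
  | [], _ => by simp [wedgeMon, wedgeL, sd, bElem_empty]
  | a :: l, h => by
      have h' := List.pairwise_cons.1 h
      have e : wedgeMon A (a :: l) = wedge A (xg A a) (wedgeMon A l) := rfl
      rw [e, wedgeMon_eq l h'.2]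
      by_cases hl : sd ⊤ l
      · rw [if_pos hl]
        by_cases ha : a ∈ l
        · rw [wedge_x_mem A (List.mem_toFinset.2 ha), if_neg]
          intro h2
          exact lt_irrefl _ (sd_lt h2.2 a ha)
        · have hlt : ∀ x ∈ l, x < a := fun x hx =>
            lt_of_le_of_ne (h'.1 x hx) (fun hxa => ha (hxa ▸ hx))
          rw [wedge_x_lt A (fun x hx => hlt x (List.mem_toFinset.1 hx)), if_pos,
            List.toFinset_cons]
          refine ⟨ctop _, ?_⟩
          cases l with
          | nil => trivial
          | cons b l => exact ⟨by have := hlt b (by simp); exact_mod_cast this, hl.2⟩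
      · rw [if_neg hl, wedge_zero', if_neg]
        intro h2
        exact hl (sd_mono le_top h2.2)

theorem sd_pairwise : ∀ {l : List ℕ} {p : WithTop ℕ}, sd p l → l.Pairwise (· > ·)
  | [], _, _ => List.Pairwise.nil
  | a :: l, p, h => List.pairwise_cons.2
      ⟨fun x hx => by have := sd_lt h.2 x hx; exact_mod_cast this, sd_pairwise h.2⟩

theorem sd_of_pairwise : ∀ {l : List ℕ} {p : WithTop ℕ}, l.Pairwise (· > ·) →
    (∀ x ∈ l, (x : WithTop ℕ) < p) → sd p l
  | [], _, _, _ => trivial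
  | a :: l, p, h, hp => ⟨hp a (by simp), sd_of_pairwise (List.pairwise_cons.1 h).2
      (fun x hx => by have := (List.pairwise_cons.1 h).1 x hx; exact_mod_cast this)⟩

theorem near_up : ∀ {l ν : List ℕ}, l.Pairwise (· > ·) →
    List.Forall₂ (fun a b => a ≤ b ∧ b ≤ a + 1) l ν → ν.Pairwise (· ≥ ·) := by
  intro l ν hl h
  induction h with
  | nil => exact List.Pairwise.nil
  | @cons a b l ν hab h ih =>
    have h' := List.pairwise_cons.1 hl
    refine List.pairwise_cons.2 ⟨fun x hx => ?_, ih h'.2⟩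
    obtain ⟨y, hy, hyx⟩ : ∃ y ∈ l, x ≤ y + 1 := by
      clear ih hl h'
      induction h with
      | nil => simp at hx
      | @cons c d l ν hcd h ih =>
        rcases List.mem_cons.1 hx with rfl | hx
        · exact ⟨c, by simp, hcd.2⟩
        · obtain ⟨y, hy, h2⟩ := ih hx
          exact ⟨y, by simp [hy], h2⟩
    have := h'.1 y hy
    omega

theorem near_dn : ∀ {l ν : List ℕ}, l.Pairwise (· > ·) →
    List.Forall₂ (fun a b => b ≤ a ∧ a ≤ b + 1) l ν → ν.Pairwise (· ≥ ·) := by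
  intro l ν hl h
  induction h with
  | nil => exact List.Pairwise.nil
  | @cons a b l ν hab h ih =>
    have h' := List.pairwise_cons.1 hl
    refine List.pairwise_cons.2 ⟨fun x hx => ?_, ih h'.2⟩
    obtain ⟨y, hy, hyx⟩ : ∃ y ∈ l, x ≤ y := by
      clear ih hl h'
      induction h with
      | nil => simp at hx
      | @cons c d l ν hcd h ih =>
        rcases List.mem_cons.1 hx with rfl | hx
        · exact ⟨c, by simp, hcd.1⟩
        · obtain ⟨y, hy, h2⟩ := ih hx
          exact ⟨y, by simp [hy], h2⟩
    have := h'.1 y hy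
    omega

theorem descList_toFinset {l : List ℕ} (h : l.Pairwise (· > ·)) : descList l.toFinset = l := by
  unfold descList
  have h1 : (l.reverse).Pairwise (· < ·) := List.pairwise_reverse.2 h
  have : l.toFinset.sort (· ≤ ·) = l.reverse := by
    rw [← List.toFinset_reverse]
    exact (List.toFinset_sort (· ≤ ·) (h1.imp ne_of_lt)).2 (h1.imp le_of_lt)
  rw [this, List.reverse_reverse]

theorem hs_bElem (F : ℕ → List ℕ → Ext A) (k : ℕ) (hF : F k [] = if k = 0 then one A else 0)
    {l : List ℕ} (h : l.Pairwise (· > ·)) :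
    ext1 A (hsOn A F k) (bElem A true l.toFinset) = F k l := by
  rcases l with _ | ⟨a, l⟩
  · simp [bElem, ext1_eq, hsOn, hF]
  · rw [bElem_ne A true (t := (a :: l).toFinset) ⟨a, by simp⟩, ext1_eq,
      Finsupp.linearCombination_single, one_smul]
    simp only [hsOn, twist, if_true]
    rw [descList_toFinset h]

theorem sbarPlusL_eq (k : ℕ) (l : List ℕ) :
    sbarPlusL A k l = npH A k (TP k l (wedgeMon A)) := by
  rw [← npH_eq]; rfl

theorem sbarMinusL_eq (k : ℕ) (l : List ℕ) :
    sbarMinusL A k l = npH A k (TM k l (wedgeMon A)) := by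
  rw [← npH_eq]; rfl

theorem npH_one (k : ℕ) : npH A k (one A) = one A := by
  unfold npH
  split_ifs
  · rfl
  · simp [one, neg_single, negB]

theorem wedgeMon_nil : wedgeMon A [] = one A := rfl

theorem sbarPlus_mon (k : ℕ) {l : List ℕ} (h : sd ⊤ l) :
    sbarPlus A k (bElem A true l.toFinset) = npH A k (TP k l (wedgeMon A)) := by
  rw [sbarPlus, hs_bElem A _ _ _ (sd_pairwise h), sbarPlusL_eq]
  rw [sbarPlusL_eq, TP_nil, wedgeMon_nil]
  split_ifs
  · exact npH_one A k
  · exact map_zero _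

theorem sbarMinus_mon (k : ℕ) {l : List ℕ} (h : sd ⊤ l) :
    sbarMinus A k (bElem A true l.toFinset) = npH A k (TM k l (wedgeMon A)) := by
  rw [sbarMinus, hs_bElem A _ _ _ (sd_pairwise h), sbarMinusL_eq]
  rw [sbarMinusL_eq, TM_nil, wedgeMon_nil]
  split_ifs
  · exact npH_one A k
  · exact map_zero _

/-- additive version of `ext1` -/
noncomputable def extH (g : XB → Ext A) : Ext A →+ Ext A :=
  (Finsupp.linearCombination A g).toAddMonoidHom

/-- the final functional -/
noncomputable def Lf (d e : ℕ) : Ext A →+ Ext A := (wR A (xg A 0)).comp ((npH A d).comp (npH A e))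

open Classical in
/-- the final function on target lists -/
noncomputable def psi (d e : ℕ) (μ : List ℕ) : Ext A :=
  if sd ⊤ μ then Lf A d e (bElem A true μ.toFinset) else 0

theorem npH_bElem (d : ℕ) (ε : Bool) (s : Finset ℕ) : ∃ ε', npH A d (bElem A ε s) = bElem A ε' s := by
  unfold npH
  split_ifs
  · exact ⟨ε, rfl⟩
  · refine ⟨!ε, ?_⟩
    change neg A _ = _
    unfold bElem
    split_ifs <;> simp [neg_single, negB]

theorem psi_good (d e : ℕ) : Good (psi A d e) := by
  intro μ hμ
  unfold psi
  split_ifs with h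
  · have h0 : 0 ∈ μ := by tauto
    obtain ⟨ε, h1⟩ := npH_bElem A e true μ.toFinset
    obtain ⟨ε', h2⟩ := npH_bElem A d ε μ.toFinset
    simp only [Lf, AddMonoidHom.comp_apply, h1, h2]
    exact wedge_x0 A ε' (List.mem_toFinset.2 h0)
  · rfl

theorem Lf_mon (d e : ℕ) {μ : List ℕ} (h : μ.Pairwise (· ≥ ·)) :
    Lf A d e (wedgeMon A μ) = psi A d e μ := by
  rw [wedgeMon_eq A μ h, psi]
  split_ifs <;> simp

open Classical in
theorem lhs_eq (d e : ℕ) {l : List ℕ} (hl : sd ⊤ l) :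
    wedge A (sbarMinus A d (sbarPlus A e (bElem A true l.toFinset))) (xg A 0) =
      TP e l (fun ν => if sd ⊤ ν then TM d ν (psi A d e) else 0) := by
  rw [sbarPlus_mon A e hl, sbarMinus, hs_npH]
  have h1 : ext1 A (hsOn A (sbarMinusL A) d) (TP e l (wedgeMon A)) =
      TP e l (fun ν => sbarMinus A d (wedgeMon A ν)) :=
    TP_map (extH A (hsOn A (sbarMinusL A) d)) e l _
  rw [h1]
  change ((wR A (xg A 0)).comp (npH A e)) _ = _
  rw [TP_map]
  refine TP_congr (φ := psi A d e) (φ' := psi A d e) _ _ _ _ fun ν hν => ?_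
  rw [wedgeMon_eq A ν (near_up (sd_pairwise hl) hν)]
  split_ifs with hs
  · rw [sbarMinus_mon A d hs, AddMonoidHom.comp_apply, npH_comm]
    change Lf A d e _ = _
    rw [TM_map]
    exact TM_congr (φ := psi A d e) (φ' := psi A d e) _ _ _ _ fun μ hμ =>
      Lf_mon A d e (near_dn (sd_pairwise hs) hμ)
  · rw [show sbarMinus A d 0 = 0 from map_zero (extH A (hsOn A (sbarMinusL A) d)), map_zero]

open Classical in
theorem rhs_eq (d e : ℕ) {l : List ℕ} (hl : sd ⊤ l) :
    wedge A (sbarPlus A e (sbarMinus A d (bElem A true l.toFinset))) (xg A 0) =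
      TM d l (fun ν => if sd ⊤ ν then TP e ν (psi A d e) else 0) := by
  rw [sbarMinus_mon A d hl, sbarPlus, hs_npH]
  have h1 : ext1 A (hsOn A (sbarPlusL A) e) (TM d l (wedgeMon A)) =
      TM d l (fun ν => sbarPlus A e (wedgeMon A ν)) :=
    TM_map (extH A (hsOn A (sbarPlusL A) e)) d l _
  rw [h1]
  change ((wR A (xg A 0)).comp (npH A d)) _ = _
  rw [TM_map]
  refine TM_congr (φ := psi A d e) (φ' := psi A d e) _ _ _ _ fun ν hν => ?_
  rw [wedgeMon_eq A ν (near_dn (sd_pairwise hl) hν)]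
  split_ifs with hs
  · rw [sbarPlus_mon A e hs, AddMonoidHom.comp_apply]
    change Lf A d e _ = _
    rw [TP_map]
    exact TP_congr (φ := psi A d e) (φ' := psi A d e) _ _ _ _ fun μ hμ =>
      Lf_mon A d e (near_up (sd_pairwise hs) hμ)
  · rw [show sbarPlus A e 0 = 0 from map_zero (extH A (hsOn A (sbarPlusL A) e)), map_zero]

end extside
end ExtSemi

namespace ExtSemi

/-- For every `r ≥ 1` and every partition `λ` with at most `r`
parts, the Schubert derivations `σ̄₋(z)` and `σ̄₊(w)` commute against `x^0`:
`(σ̄₋(z)(σ̄₊(w)[x]^r_λ)) ∧ x^0 = (σ̄₊(w)(σ̄₋(z)[x]^r_λ)) ∧ x^0`,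
coefficientwise in the powers `z^{−d}` and `w^e`. -/
theorem sbar_commute_against_x0 (A : Type*) [CommSemiring A]
    (r : ℕ) (hr : 1 ≤ r) (lam : Fin r → ℕ) (hlam : Antitone lam) (d e : ℕ) :
    wedge A (sbarMinus A d (sbarPlus A e (xlam A r lam))) (xg A 0) =
      wedge A (sbarPlus A e (sbarMinus A d (xlam A r lam))) (xg A 0) := by
  classical
  have hp : (List.ofFn fun i : Fin r => (r - 1 - (i : ℕ)) + lam i).Pairwise (· > ·) := by
    rw [List.pairwise_ofFn]
    intro i j hij
    have h1 := hlam hij.le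
    have h2 : (i : ℕ) < j := hij
    have h3 := j.2
    simp only [gt_iff_lt]
    omega
  have hs : sd ⊤ (List.ofFn fun i : Fin r => (r - 1 - (i : ℕ)) + lam i) :=
    sd_of_pairwise hp (fun x _ => ctop x)
  rw [xlam, wedgeMon_eq A _ (hp.imp le_of_lt), if_pos hs, lhs_eq A d e hs, rhs_eq A d e hs]
  exact key d e _ hs _ (psi_good A d e)

end ExtSemi
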